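/- If h, k ∈ M₊ have equal central support, k is properly infinite, and h is a countable sum of finite elements, then k ≈ λk for every λ ∈ (0,∞) and (h + k) ≈ k. -/

import Mathlib

open ContinuousLinearMap Filter Topology

universe u

noncomputable section

variable {H : Type u} [NormedAddCommGroup H] [InnerProductSpace ℂ H] [CompleteSpace H]

/-- `p` is an (orthogonal) projection belonging to the von Neumann algebra `M`. -/
def IsProjIn (M : VonNeumannAlgebra H) (p : H →L[ℂ] H) : Prop :=
  p ∈ M ∧ IsSelfAdjoint p ∧ p * p = p

/-- Murray–von Neumann equivalence of `p` and `q` relative to `M`: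
there is a partial isometry `v ∈ M` with `v* v = p` and `v v* = q`. -/
def MvNEquiv (M : VonNeumannAlgebra H) (p q : H →L[ℂ] H) : Prop :=
  ∃ v ∈ M, adjoint v * v = p ∧ v * adjoint v = q

/-- The order on projections: `p ≤ q` iff `p q = p = q p`. -/
def ProjLE (p q : H →L[ℂ] H) : Prop := p * q = p ∧ q * p = p

/-- Murray–von Neumann subequivalence `p ≼ q`: `p` is equivalent to a subprojection of `q`. -/
def SubEquiv (M : VonNeumannAlgebra H) (p q : H →L[ℂ] H) : Prop :=
  ∃ r, IsProjIn M r ∧ MvNEquiv M p r ∧ ProjLE r q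

/-- `z` is a central projection of `M`. -/
def IsCentralProj (M : VonNeumannAlgebra H) (z : H →L[ℂ] H) : Prop :=
  IsProjIn M z ∧ ∀ x ∈ M, z * x = x * z

/-- A projection `p` is finite: `p ∼ q ≤ p` implies `q = p`. -/
def FiniteProj (M : VonNeumannAlgebra H) (p : H →L[ℂ] H) : Prop :=
  ∀ q, IsProjIn M q → ProjLE q p → MvNEquiv M p q → q = p

/-- A projection `p` is properly infinite: it is a countably infinite sum of pairwise
orthogonal projections, each equivalent to `p`. -/
def ProperlyInfiniteProj (M : VonNeumannAlgebra H) (p : H →L[ℂ] H) : Prop :=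
  p ≠ 0 ∧ ∃ e : ℕ → H →L[ℂ] H, (∀ n, IsProjIn M (e n)) ∧
    (Pairwise fun m n => e m * e n = 0) ∧ (∀ n, MvNEquiv M (e n) p) ∧
    ∀ ξ : H, HasSum (fun n => e n ξ) (p ξ)

/-- `z` is the central support of `h`: the smallest central projection with `z h = h`. -/
def IsCentralSupport (M : VonNeumannAlgebra H) (h z : H →L[ℂ] H) : Prop :=
  IsCentralProj M z ∧ z * h = h ∧ ∀ w, IsCentralProj M w → w * h = h → z * w = z

/-- The projection `e` is σ-finite relative to `M`: every family of pairwise orthogonal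
nonzero subprojections of `e` in `M` is countable. -/
def SigmaFiniteProj (M : VonNeumannAlgebra H) (e : H →L[ℂ] H) : Prop :=
  ∀ S : Set (H →L[ℂ] H), (∀ q ∈ S, IsProjIn M q ∧ q ≠ 0 ∧ ProjLE q e) →
    (S.Pairwise fun a b => a * b = 0) → S.Countable

/-- Kadison–Pedersen equivalence on the positive cone: `h ≈ k` iff there is a family
`{x_α} ⊆ M` with `h = Σ x_α* x_α` and `k = Σ x_α x_α*` (sums in the strong topology). -/
def KPEquiv (M : VonNeumannAlgebra H) (h k : H →L[ℂ] H) : Prop :=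
  ∃ (ι : Type u) (x : ι → H →L[ℂ] H), (∀ i, x i ∈ M) ∧
    (∀ ξ : H, HasSum (fun i => (adjoint (x i) * x i) ξ) (h ξ)) ∧
    (∀ ξ : H, HasSum (fun i => (x i * adjoint (x i)) ξ) (k ξ))

/-- Operator order: `a ≤ b` iff `b - a` is positive. -/
def OpLE (a b : H →L[ℂ] H) : Prop := (b - a).IsPositive

/-- `h ∈ M₊` is finite in the Kadison–Pedersen sense: `h ≈ k ≤ h` implies `k = h`. -/
def KPFinite (M : VonNeumannAlgebra H) (h : H →L[ℂ] H) : Prop :=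
  ∀ k, k ∈ M → k.IsPositive → OpLE k h → KPEquiv M h k → k = h

/-- `h ∈ M₊` is properly infinite: `z h` is finite and nonzero for no central projection `z`. -/
def KPProperlyInfinite (M : VonNeumannAlgebra H) (h : H →L[ℂ] H) : Prop :=
  h ≠ 0 ∧ ∀ z, IsCentralProj M z → KPFinite M (z * h) → z * h = 0

/-- The set of projections of `M`. -/
def ProjSet (M : VonNeumannAlgebra H) := {p : H →L[ℂ] H // IsProjIn M p}

/-- The strong operator topology on the projections of `M` (topology of pointwise convergence). -/
instance (M : VonNeumannAlgebra H) : TopologicalSpace (ProjSet M) :=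
  TopologicalSpace.induced (fun p : ProjSet M => (fun ξ => p.1 ξ : H → H)) inferInstance

/-- The quotient `P(M)/∼` of the projections of `M` by Murray–von Neumann equivalence,
carrying the quotient (strong operator) topology. -/
abbrev PQuot (M : VonNeumannAlgebra H) :=
  Quot (fun p q : ProjSet M => MvNEquiv M p.1 q.1)

/-- The quotient map `P(M) → P(M)/∼`. -/
def pquotMk (M : VonNeumannAlgebra H) : ProjSet M → PQuot M := Quot.mk _

/-- The strong operator topology on `B(H)`. -/
def SOT : TopologicalSpace (H →L[ℂ] H) :=
  TopologicalSpace.induced (fun a : H →L[ℂ] H => (fun ξ => a ξ : H → H)) inferInstance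

/-- The order induced on `P(M)/∼` by Murray–von Neumann subequivalence. -/
def QLE (M : VonNeumannAlgebra H) (a b : PQuot M) : Prop :=
  ∃ p q : ProjSet M, a = pquotMk M p ∧ b = pquotMk M q ∧ SubEquiv M p.1 q.1

/-!
Exhaustion writes `k = T + f` with `f` finite and `T` the sum of a sequence of mutually equivalent
elements: if the remainder were infinite, say `f ≈ l ≤ f` with `l ≠ f`, iterating the equivalence
would peel off infinitely many copies of `f - l`. A central projection `w` with `w T = 0` makes
`w k = w f` finite, hence zero because `k` is properly infinite; so `T` carries the central support
of `k`, and comparison yields `f ≼ T`. The Eilenberg swindle then gives `k = f + T ≈ T`, so that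
`k` itself is the sum of a sequence of mutually equivalent elements. Such an element absorbs
everything subequivalent to it. This settles `λ k`, and also `h`: by the same comparison argument
each of its finite summands is subequivalent to one of the infinitely many copies of `k` in `k`.

Transitivity and Riesz decomposition for `≈` come from the matrix `z i j = y j * a i*` attached to
two decompositions `k = ∑ x i * x i* = ∑ y j* * y j`, where `x i* = a i * √k` is the Douglas
factorization.
-/

open scoped InnerProductSpace ComplexOrder

section StrongSum

variable {R E F : Type*} [Semiring R] [AddCommMonoid E] [Module R E] [TopologicalSpace E]
  [AddCommMonoid F] [Module R F] [TopologicalSpace F]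

/-- The family of operators `a` has sum `h` in the strong operator topology, i.e. pointwise. -/
def HasStrongSum {ι : Type*} (a : ι → E →L[R] F) (h : E →L[R] F) : Prop :=
  ∀ ξ, HasSum (fun i => a i ξ) (h ξ)

namespace HasStrongSum

variable {ι κ : Type*} {a : ι → E →L[R] F} {h k : E →L[R] F}

lemma unique [T2Space F] (ha : HasStrongSum a h) (hk : HasStrongSum a k) : h = k :=
  ContinuousLinearMap.ext fun ξ => (ha ξ).unique (hk ξ)

lemma mul_left {f : ι → E →L[R] E} {g : E →L[R] E} (hf : HasStrongSum f g) (t : E →L[R] E) :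
    HasStrongSum (fun i => t * f i) (t * g) :=
  fun ξ => (hf ξ).mapL t

lemma mul_right {f : ι → E →L[R] E} {g : E →L[R] E} (hf : HasStrongSum f g) (t : E →L[R] E) :
    HasStrongSum (fun i => f i * t) (g * t) :=
  fun ξ => hf (t ξ)

lemma reindex (ha : HasStrongSum a h) (e : κ ≃ ι) : HasStrongSum (fun j => a (e j)) h :=
  fun ξ => (e.hasSum_iff (f := fun i => a i ξ)).2 (ha ξ)

lemma sigma_swap {c : ι → κ → E →L[R] F}
    (hc : HasStrongSum (fun p : Σ _ : κ, ι => c p.2 p.1) h) :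
    HasStrongSum (fun p : Σ _ : ι, κ => c p.1 p.2) h :=
  hc.reindex <| (Equiv.sigmaEquivProd ι κ).trans <|
    (Equiv.prodComm ι κ).trans (Equiv.sigmaEquivProd κ ι).symm

lemma of_sigma [ContinuousAdd F] [RegularSpace F] {κ : ι → Type*} {c : ∀ i, κ i → E →L[R] F}
    (hc : ∀ i, HasStrongSum (c i) (a i))
    (hh : HasStrongSum (fun p : Σ i, κ i => c p.1 p.2) h) : HasStrongSum a h :=
  fun ξ => (hh ξ).sigma fun i => hc i ξ

lemma of_succ [ContinuousAdd F] {f : ℕ → E →L[R] F} (hf : HasStrongSum (fun n => f (n + 1)) h) :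
    HasStrongSum f (f 0 + h) :=
  fun ξ => (hf ξ).zero_add (f := fun n => f n ξ)

end HasStrongSum

lemma hasStrongSum_sum [ContinuousAdd F] {ι : Type*} [Fintype ι] (a : ι → E →L[R] F) :
    HasStrongSum a (∑ i, a i) := fun ξ => by
  rw [sum_apply]
  exact hasSum_fintype _

lemma hasStrongSum_cond [ContinuousAdd F] (a b : E →L[R] F) :
    HasStrongSum (fun i : Bool => cond i a b) (a + b) :=
  (Fintype.sum_bool fun i => cond i a b) ▸ hasStrongSum_sum _

end StrongSum

section PositiveOperator

variable {E : Type*} [NormedAddCommGroup E] [InnerProductSpace ℂ E]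

lemma reApplyInnerSelf_add (a b : E →L[ℂ] E) (ξ : E) :
    (a + b).reApplyInnerSelf ξ = a.reApplyInnerSelf ξ + b.reApplyInnerSelf ξ := by
  simp [reApplyInnerSelf_apply, inner_add_left]

lemma reApplyInnerSelf_sum {ι : Type*} (s : Finset ι) (a : ι → E →L[ℂ] E) (ξ : E) :
    (∑ i ∈ s, a i).reApplyInnerSelf ξ = ∑ i ∈ s, (a i).reApplyInnerSelf ξ := by
  simp [reApplyInnerSelf_apply, sum_inner]

lemma HasStrongSum.reApplyInnerSelf {ι : Type*} {a : ι → E →L[ℂ] E} {h : E →L[ℂ] E}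
    (hs : HasStrongSum a h) (ξ : E) :
    HasSum (fun i => (a i).reApplyInnerSelf ξ) (h.reApplyInnerSelf ξ) := by
  simp only [reApplyInnerSelf_apply, inner_re_symm (𝕜 := ℂ) _ ξ]
  exact ((hs ξ).mapL (innerSL ℂ ξ)).mapL Complex.reCLM

variable {a b : E →L[ℂ] E}

lemma reApplyInnerSelf_nonneg (ha : 0 ≤ a) (ξ : E) : 0 ≤ a.reApplyInnerSelf ξ :=
  ((nonneg_iff_isPositive a).1 ha).re_inner_nonneg_left ξ

lemma reApplyInnerSelf_mono (hab : a ≤ b) (ξ : E) :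
    a.reApplyInnerSelf ξ ≤ b.reApplyInnerSelf ξ := by
  have := reApplyInnerSelf_nonneg ((nonneg_iff_isPositive _).2 hab) ξ
  rw [← sub_add_cancel b a, reApplyInnerSelf_add]
  exact le_add_of_nonneg_left this

lemma HasStrongSum.nonneg {ι : Type*} {f : ι → E →L[ℂ] E} {h : E →L[ℂ] E}
    (hs : HasStrongSum f h) (hf : ∀ i, 0 ≤ f i) : 0 ≤ h := by
  rw [nonneg_iff_isPositive, isPositive_iff_complex]
  intro ξ
  have hξ : 0 ≤ ⟪ξ, h ξ⟫_ℂ := ((hs ξ).mapL (innerSL ℂ ξ)).nonneg fun i =>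
    ((nonneg_iff_isPositive _).1 (hf i)).inner_nonneg_right ξ
  rw [← inner_conj_symm, starRingEnd_apply, star_nonneg_iff, RCLike.nonneg_iff] at hξ
  exact ⟨RCLike.ext (by simp) (by simpa using hξ.2.symm), hξ.1⟩

variable [CompleteSpace E]

lemma le_of_reApplyInnerSelf_le (ha : 0 ≤ a) (hb : 0 ≤ b)
    (hab : ∀ ξ, a.reApplyInnerSelf ξ ≤ b.reApplyInnerSelf ξ) : a ≤ b := by
  rw [ContinuousLinearMap.le_def, isPositive_def']
  refine ⟨(IsSelfAdjoint.of_nonneg hb).sub (.of_nonneg ha), fun ξ => ?_⟩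
  have := hab ξ
  rw [← sub_add_cancel b a, reApplyInnerSelf_add] at this
  exact nonneg_of_le_add_left this

lemma reApplyInnerSelf_star_mul_self (x : E →L[ℂ] E) (ξ : E) :
    (star x * x).reApplyInnerSelf ξ = ‖x ξ‖ ^ 2 :=
  (apply_norm_sq_eq_inner_adjoint_left x ξ).symm

lemma norm_sq_apply_le (ha : 0 ≤ a) (ξ : E) : ‖a ξ‖ ^ 2 ≤ ‖a‖ * a.reApplyInnerSelf ξ := by
  set s := CFC.sqrt a
  have hss : s * s = a := CFC.sqrt_mul_sqrt_self a ha
  have hstar : star s = s := (IsSelfAdjoint.of_nonneg (CFC.sqrt_nonneg a)).star_eq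
  calc ‖a ξ‖ ^ 2 = ‖s (s ξ)‖ ^ 2 := by rw [← mul_apply_eq_comp, hss]
    _ ≤ (‖s‖ * ‖s ξ‖) ^ 2 := by gcongr; exact s.le_opNorm _
    _ = ‖star s * s‖ * (star s * s).reApplyInnerSelf ξ := by
      rw [reApplyInnerSelf_star_mul_self, CStarRing.norm_star_mul_self, mul_pow, pow_two ‖s‖]
    _ = ‖a‖ * a.reApplyInnerSelf ξ := by rw [hstar, hss]

lemma norm_sq_apply_le_of_le (ha : 0 ≤ a) (hab : a ≤ b) (ξ : E) :
    ‖a ξ‖ ^ 2 ≤ ‖b‖ * a.reApplyInnerSelf ξ :=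
  (norm_sq_apply_le ha ξ).trans <| mul_le_mul_of_nonneg_right
    (CStarAlgebra.norm_le_norm_of_nonneg_of_le ha hab) (reApplyInnerSelf_nonneg ha ξ)

section StrongSum

variable {ι : Type*} {f : ι → E →L[ℂ] E} {h k : E →L[ℂ] E}

namespace HasStrongSum

lemma sum_le (hs : HasStrongSum f h) (hf : ∀ i, 0 ≤ f i) (s : Finset ι) : ∑ i ∈ s, f i ≤ h :=
  le_of_reApplyInnerSelf_le (Finset.sum_nonneg fun i _ => hf i) (hs.nonneg hf) fun ξ => by
    rw [reApplyInnerSelf_sum]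
    exact sum_le_hasSum s (fun i _ => reApplyInnerSelf_nonneg (hf i) ξ) (hs.reApplyInnerSelf ξ)

lemma le (hs : HasStrongSum f h) (hf : ∀ i, 0 ≤ f i) (i : ι) : f i ≤ h := by
  simpa only [Finset.sum_singleton] using hs.sum_le hf {i}

lemma le_of_sum_le (hs : HasStrongSum f h) (hf : ∀ i, 0 ≤ f i)
    (hk : ∀ s : Finset ι, ∑ i ∈ s, f i ≤ k) : h ≤ k :=
  le_of_reApplyInnerSelf_le (hs.nonneg hf) (hk ∅) fun ξ =>
    hasSum_le_of_sum_le (hs.reApplyInnerSelf ξ) fun s => by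
      rw [← reApplyInnerSelf_sum]
      exact reApplyInnerSelf_mono (hk s) ξ

end HasStrongSum

lemma summable_apply_of_sum_le (hf : ∀ i, 0 ≤ f i) (hk : ∀ s : Finset ι, ∑ i ∈ s, f i ≤ k)
    (ξ : E) : Summable fun i => f i ξ := by
  have hf0 := fun s : Finset ι => Finset.sum_nonneg fun i (_ : i ∈ s) => hf i
  have hsummable : Summable fun i => (f i).reApplyInnerSelf ξ :=
    summable_of_sum_le (fun i => reApplyInnerSelf_nonneg (hf i) ξ) fun s => by
      rw [← reApplyInnerSelf_sum]
      exact reApplyInnerSelf_mono (hk s) ξ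
  rw [summable_iff_vanishing_norm] at hsummable ⊢
  intro ε hε
  obtain ⟨s, hs⟩ := hsummable (ε ^ 2 / (‖k‖ + 1)) (by positivity)
  refine ⟨s, fun t ht => lt_of_pow_lt_pow_left₀ 2 hε.le ?_⟩
  have hq := (le_abs_self _).trans_lt (hs t ht)
  rw [← reApplyInnerSelf_sum, lt_div_iff₀ (by positivity)] at hq
  calc ‖∑ i ∈ t, f i ξ‖ ^ 2 ≤ ‖k‖ * (∑ i ∈ t, f i).reApplyInnerSelf ξ := by
        rw [← sum_apply]
        exact norm_sq_apply_le_of_le (hf0 t) (hk t) ξ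
    _ ≤ (∑ i ∈ t, f i).reApplyInnerSelf ξ * (‖k‖ + 1) := by
        linarith [reApplyInnerSelf_nonneg (hf0 t) ξ]
    _ < ε ^ 2 := hq

/-- **Vigier's theorem**. -/
lemma exists_hasStrongSum_of_sum_le (hf : ∀ i, 0 ≤ f i) (hk : ∀ s : Finset ι, ∑ i ∈ s, f i ≤ k) :
    ∃ h, HasStrongSum f h := by
  have hlim : Tendsto (fun (s : Finset ι) ξ => (∑ i ∈ s, f i) ξ) atTop
      (𝓝 fun ξ => ∑' i, f i ξ) := by
    simp only [sum_apply]
    exact tendsto_pi_nhds.2 fun ξ => (summable_apply_of_sum_le hf hk ξ).hasSum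
  have hbounded : Bornology.IsBounded (Set.range fun s : Finset ι => ∑ i ∈ s, f i) :=
    isBounded_iff_forall_norm_le.2 ⟨‖k‖, Set.forall_mem_range.2 fun s =>
      CStarAlgebra.norm_le_norm_of_nonneg_of_le (Finset.sum_nonneg fun i _ => hf i) (hk s)⟩
  exact ⟨ofTendstoOfBoundedRange _ _ hlim hbounded,
    fun ξ => (summable_apply_of_sum_le hf hk ξ).hasSum⟩

namespace HasStrongSum

lemma of_reApplyInnerSelf (hf : ∀ i, 0 ≤ f i) (hh : 0 ≤ h)
    (hq : ∀ ξ, HasSum (fun i => (f i).reApplyInnerSelf ξ) (h.reApplyInnerSelf ξ)) :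
    HasStrongSum f h := by
  have hle (s : Finset ι) : ∑ i ∈ s, f i ≤ h :=
    le_of_reApplyInnerSelf_le (Finset.sum_nonneg fun i _ => hf i) hh fun ξ => by
      rw [reApplyInnerSelf_sum]
      exact sum_le_hasSum s (fun i _ => reApplyInnerSelf_nonneg (hf i) ξ) (hq ξ)
  obtain ⟨g, hg⟩ := exists_hasStrongSum_of_sum_le hf hle
  have hgq (ξ) : g.reApplyInnerSelf ξ = h.reApplyInnerSelf ξ :=
    (hg.reApplyInnerSelf ξ).unique (hq ξ)
  have hgh : g = h := le_antisymm (hg.le_of_sum_le hf hle)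
    (le_of_reApplyInnerSelf_le hh (hg.nonneg hf) fun ξ => (hgq ξ).ge)
  exact hgh ▸ hg

lemma sigma {κ : ι → Type*} {a : ∀ i, κ i → E →L[ℂ] E} (ha : ∀ i j, 0 ≤ a i j)
    (haf : ∀ i, HasStrongSum (a i) (f i)) (hfh : HasStrongSum f h) :
    HasStrongSum (fun p : Σ i, κ i => a p.1 p.2) h := by
  have hf (i) : 0 ≤ f i := (haf i).nonneg (ha i)
  refine .of_reApplyInnerSelf (fun p => ha _ _) (hfh.nonneg hf) fun ξ => ?_
  exact HasSum.sigma_of_hasSum (hfh.reApplyInnerSelf ξ)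
    (fun i => (haf i).reApplyInnerSelf ξ) <|
    (summable_sigma_of_nonneg fun p => reApplyInnerSelf_nonneg (ha _ _) ξ).2
      ⟨fun i => ((haf i).reApplyInnerSelf ξ).summable, by
        simpa only [((haf _).reApplyInnerSelf ξ).tsum_eq] using
          (hfh.reApplyInnerSelf ξ).summable⟩

lemma swap {κ : Type*} {a : ι → κ → E →L[ℂ] E} {g : κ → E →L[ℂ] E} (ha : ∀ i j, 0 ≤ a i j)
    (haf : ∀ i, HasStrongSum (a i) (f i)) (hfh : HasStrongSum f h)
    (hag : ∀ j, HasStrongSum (fun i => a i j) (g j)) : HasStrongSum g h :=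
  of_sigma hag (sigma_swap (c := fun j i => a i j) (sigma ha haf hfh))

end HasStrongSum

lemma HasStrongSum.exists_comp_injective {κ : Type*} (hs : HasStrongSum f h)
    (hf : ∀ i, 0 ≤ f i) {e : κ → ι} (he : e.Injective) :
    ∃ g, HasStrongSum (fun j => f (e j)) g :=
  exists_hasStrongSum_of_sum_le (fun j => hf (e j)) fun s =>
    (Finset.sum_map s ⟨e, he⟩ f).symm.trans_le (hs.sum_le hf _)

lemma exists_hasStrongSum_of_le {g : ι → E →L[ℂ] E} (hf : ∀ i, 0 ≤ f i) (hfg : ∀ i, f i ≤ g i)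
    (hg : HasStrongSum g k) : ∃ h ≤ k, HasStrongSum f h := by
  have hle (s : Finset ι) : ∑ i ∈ s, f i ≤ k := (Finset.sum_le_sum fun i _ => hfg i).trans
    (hg.sum_le (fun i => (hf i).trans (hfg i)) s)
  obtain ⟨h, hh⟩ := exists_hasStrongSum_of_sum_le hf hle
  exact ⟨h, hh.le_of_sum_le hf hle, hh⟩

end StrongSum

end PositiveOperator

section Factorization

variable {𝕜 E F G : Type*} [RCLike 𝕜] [NormedAddCommGroup E] [NormedSpace 𝕜 E]
  [NormedAddCommGroup F] [InnerProductSpace 𝕜 F] [CompleteSpace F]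
  [NormedAddCommGroup G] [NormedSpace 𝕜 G]

lemma eq_of_eqOn_range_of_eqOn_orthogonal {a b : F →L[𝕜] G} (s : E →L[𝕜] F)
    (hrange : ∀ ξ, a (s ξ) = b (s ξ)) (horth : ∀ η ∈ s.rangeᗮ, a η = b η) : a = b := by
  have hclosure : Set.EqOn a b (closure s.range) :=
    Set.EqOn.closure (by rintro _ ⟨ξ, rfl⟩; exact hrange ξ) a.continuous b.continuous
  have : CompleteSpace s.range.topologicalClosure := inferInstance
  ext v
  obtain ⟨p, hp, q, hq, rfl⟩ := s.range.topologicalClosure.exists_add_mem_mem_orthogonal v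
  rw [Submodule.orthogonal_closure] at hq
  rw [map_add, map_add, hclosure hp, horth q hq]

/-- **Douglas factorization**. -/
lemma exists_comp_eq_of_norm_le [CompleteSpace G] {x : E →L[𝕜] G} {s : E →L[𝕜] F}
    (hxs : ∀ ξ, ‖x ξ‖ ≤ ‖s ξ‖) :
    ∃ a : F →L[𝕜] G, (∀ ξ, a (s ξ) = x ξ) ∧ ∀ η ∈ s.rangeᗮ, a η = 0 := by
  set K := s.range.topologicalClosure with hK
  let e : E →ₗ[𝕜] K := s.toLinearMap.codRestrict K fun ξ =>
    Submodule.le_topologicalClosure _ ⟨ξ, rfl⟩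
  have he : DenseRange e := by
    rw [DenseRange, Subtype.dense_iff, ← Set.range_comp]
    exact subset_rfl
  have hbound : ∃ C : ℝ, ∀ ξ, ‖x.toLinearMap ξ‖ ≤ C * ‖e ξ‖ :=
    ⟨1, fun ξ => (hxs ξ).trans_eq (one_mul _).symm⟩
  refine ⟨x.toLinearMap.extendOfNorm e ∘L K.orthogonalProjectionOnto, fun ξ => ?_, fun η hη => ?_⟩
  · have hproj : K.orthogonalProjectionOnto (s ξ) = e ξ :=
      Submodule.orthogonalProjectionOnto_mem_subspace_eq_self (e ξ)
    rw [comp_apply, hproj]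
    exact LinearMap.extendOfNorm_eq he hbound ξ
  · rw [← Submodule.orthogonal_closure, ← hK] at hη
    rw [comp_apply, Submodule.orthogonalProjectionOnto_eq_zero_iff.2 hη, map_zero]

end Factorization

section Membership

variable {M : VonNeumannAlgebra H} {a s x : H →L[ℂ] H}

lemma mem_iff_forall_mem_commutant : a ∈ M ↔ ∀ y ∈ M.commutant, y * a = a * y := by
  rw [← VonNeumannAlgebra.mem_commutant_iff, M.commutant_commutant]

lemma HasStrongSum.mem {ι : Type*} {f : ι → H →L[ℂ] H} (hs : HasStrongSum f a)
    (hf : ∀ i, f i ∈ M) : a ∈ M :=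
  mem_iff_forall_mem_commutant.2 fun y hy => by
    have hcomm : (fun i => y * f i) = fun i => f i * y :=
      funext fun i => mem_iff_forall_mem_commutant.1 (hf i) y hy
    exact (hcomm ▸ hs.mul_left y).unique (hs.mul_right y)

lemma sqrt_mem (ha : a ∈ M) : CFC.sqrt a ∈ M :=
  mem_iff_forall_mem_commutant.2 fun y hy => by
    have hcomm : Commute a y := (mem_iff_forall_mem_commutant.1 ha y hy).symm
    rw [CFC.sqrt_eq_cfc]
    exact (hcomm.cfc_nnreal NNReal.sqrt).eq.symm

lemma star_sqrt (a : H →L[ℂ] H) : star (CFC.sqrt a) = CFC.sqrt a :=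
  (IsSelfAdjoint.of_nonneg (CFC.sqrt_nonneg a)).star_eq

lemma exists_mem_mul_eq_of_star_mul_self_le (hx : x ∈ M) (hs : s ∈ M)
    (hxs : star x * x ≤ star s * s) : ∃ a ∈ M, a * s = x := by
  have hnorm (ξ : H) : ‖x ξ‖ ≤ ‖s ξ‖ := by
    simpa only [reApplyInnerSelf_star_mul_self, sq_le_sq₀ (norm_nonneg _) (norm_nonneg _)] using
      reApplyInnerSelf_mono hxs ξ
  obtain ⟨a, has, ha0⟩ := exists_comp_eq_of_norm_le hnorm
  refine ⟨a, mem_iff_forall_mem_commutant.2 fun y hy => ?_, ContinuousLinearMap.ext has⟩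
  have hcomm {b : H →L[ℂ] H} (hb : b ∈ M) (ξ : H) : y (b ξ) = b (y ξ) :=
    DFunLike.congr_fun (mem_iff_forall_mem_commutant.1 hb y hy) ξ
  refine eq_of_eqOn_range_of_eqOn_orthogonal s (fun ξ => ?_) fun η hη => ?_
  · simp only [mul_apply_eq_comp, has, hcomm hx, hcomm hs]
  · have hyη : y η ∈ s.rangeᗮ := by
      rw [orthogonal_range, LinearMap.mem_ker] at hη ⊢
      have hstar : y (adjoint s η) = adjoint s (y η) := hcomm (star_mem hs) η
      exact hstar.symm.trans ((congrArg y hη).trans (map_zero y))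
    rw [mul_apply_eq_comp, mul_apply_eq_comp, ha0 η hη, ha0 _ hyη, map_zero]

end Membership

section KPEquiv

variable {M : VonNeumannAlgebra H} {h k l : H →L[ℂ] H}

lemma HasStrongSum.conj {ι : Type*} {f : ι → H →L[ℂ] H} (hf : HasStrongSum f h) (t : H →L[ℂ] H) :
    HasStrongSum (fun i => t * f i * star t) (t * h * star t) :=
  (hf.mul_left t).mul_right (star t)

lemma exists_refinement {ι κ : Type*} {x : ι → H →L[ℂ] H} {y : κ → H →L[ℂ] H}
    (hx : ∀ i, x i ∈ M) (hy : ∀ j, y j ∈ M) (hxk : HasStrongSum (fun i => x i * star (x i)) k)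
    (hyk : HasStrongSum (fun j => star (y j) * y j) k) :
    ∃ z : ι → κ → H →L[ℂ] H, (∀ i j, z i j ∈ M) ∧
      (∀ i, HasStrongSum (fun j => star (z i j) * z i j) (star (x i) * x i)) ∧
      ∀ j, HasStrongSum (fun i => z i j * star (z i j)) (y j * star (y j)) := by
  have hx0 (i) : 0 ≤ x i * star (x i) := mul_star_self_nonneg _
  have hy0 (j) : 0 ≤ star (y j) * y j := star_mul_self_nonneg _
  set s := CFC.sqrt k
  have hs : s ∈ M := sqrt_mem (hxk.mem fun i => mul_mem (hx i) (star_mem (hx i)))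
  have hstar : star s = s := star_sqrt k
  have hsk : star s * s = k := by rw [hstar, CFC.sqrt_mul_sqrt_self k (hxk.nonneg hx0)]
  choose a ha has using fun i => exists_mem_mul_eq_of_star_mul_self_le (star_mem (hx i)) hs <| by
    rw [star_star, hsk]
    exact hxk.le hx0 i
  choose b _ hbs using fun j => exists_mem_mul_eq_of_star_mul_self_le (hy j) hs <| by
    rw [hsk]
    exact hyk.le hy0 j
  have hx_eq (i) : x i = s * star (a i) := by
    rw [← star_star (x i), ← has, star_mul, hstar]
  have hz (i j) : y j * star (a i) = b j * x i := by rw [hx_eq, ← mul_assoc, hbs]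
  refine ⟨fun i j => y j * star (a i), fun i j => mul_mem (hy j) (star_mem (ha i)),
    fun i => ?_, fun j => ?_⟩
  · have hsum : a i * k * star (a i) = star (x i) * x i := by
      rw [← hsk, ← has, hx_eq, hstar]
      simp only [mul_assoc]
    simpa only [hsum, star_mul, star_star, mul_assoc] using hyk.conj (a i)
  · have hsum : b j * k * star (b j) = y j * star (y j) := by
      rw [← hsk, ← hbs, star_mul, hstar]
      simp only [mul_assoc]
    simpa only [hsum, hz, star_mul, mul_assoc] using hxk.conj (b j)

namespace KPEquiv

lemma of_hasStrongSum {ι : Type*} [Small.{u} ι] {x : ι → H →L[ℂ] H} (hx : ∀ i, x i ∈ M)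
    (hh : HasStrongSum (fun i => star (x i) * x i) h)
    (hk : HasStrongSum (fun i => x i * star (x i)) k) : KPEquiv M h k :=
  ⟨Shrink.{u} ι, fun j => x ((equivShrink ι).symm j), fun _ => hx _,
    hh.reindex (equivShrink ι).symm, hk.reindex (equivShrink ι).symm⟩

lemma exists_hasStrongSum (e : KPEquiv M h k) : ∃ (ι : Type u) (x : ι → H →L[ℂ] H),
    (∀ i, x i ∈ M) ∧ HasStrongSum (fun i => star (x i) * x i) h ∧
      HasStrongSum (fun i => x i * star (x i)) k := e

lemma symm (e : KPEquiv M h k) : KPEquiv M k h := by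
  obtain ⟨ι, x, hx, hh, hk⟩ := e.exists_hasStrongSum
  exact of_hasStrongSum (x := fun i => star (x i)) (fun i => star_mem (hx i))
    (by simpa only [star_star] using hk) (by simpa only [star_star] using hh)

lemma nonneg_left (e : KPEquiv M h k) : 0 ≤ h := by
  obtain ⟨ι, x, -, hh, -⟩ := e.exists_hasStrongSum
  exact hh.nonneg fun i => star_mul_self_nonneg _

lemma mem_left (e : KPEquiv M h k) : h ∈ M := by
  obtain ⟨ι, x, hx, hh, -⟩ := e.exists_hasStrongSum
  exact hh.mem fun i => mul_mem (star_mem (hx i)) (hx i)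

lemma nonneg_right (e : KPEquiv M h k) : 0 ≤ k := e.symm.nonneg_left

lemma mem_right (e : KPEquiv M h k) : k ∈ M := e.symm.mem_left

lemma star_mul_self_mul_star_self {x : H →L[ℂ] H} (hx : x ∈ M) :
    KPEquiv M (star x * x) (x * star x) :=
  of_hasStrongSum (ι := Unit) (fun _ => hx) (fun _ => hasSum_unique _) fun _ => hasSum_unique _

lemma refl (hM : h ∈ M) (h0 : 0 ≤ h) : KPEquiv M h h := by
  simpa only [star_sqrt, CFC.sqrt_mul_sqrt_self h h0] using
    star_mul_self_mul_star_self (sqrt_mem hM)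

lemma eq_zero_left (e : KPEquiv M h 0) : h = 0 := by
  obtain ⟨ι, x, -, hh, hk⟩ := e.exists_hasStrongSum
  have hx (i) : x i = 0 := (CStarRing.mul_star_self_eq_zero_iff _).1 <|
    le_antisymm (hk.le (fun i => mul_star_self_nonneg _) i) (mul_star_self_nonneg _)
  simp only [hx, mul_zero] at hh
  exact hh.unique fun _ => hasSum_zero

lemma sum {ι : Type*} [Small.{u} ι] {a b : ι → H →L[ℂ] H} (e : ∀ i, KPEquiv M (a i) (b i))
    (ha : HasStrongSum a h) (hb : HasStrongSum b k) : KPEquiv M h k := by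
  choose κ x hx hxa hxb using fun i => (e i).exists_hasStrongSum
  exact of_hasStrongSum (x := fun p : Σ i, κ i => x p.1 p.2) (fun p => hx _ _)
    (.sigma (a := fun i j => star (x i j) * x i j) (fun i j => star_mul_self_nonneg _) hxa ha)
    (.sigma (a := fun i j => x i j * star (x i j)) (fun i j => mul_star_self_nonneg _) hxb hb)

lemma add {a b c d : H →L[ℂ] H} (e : KPEquiv M a b) (e' : KPEquiv M c d) :
    KPEquiv M (a + c) (b + d) :=
  sum (Bool.forall_bool.2 ⟨e', e⟩) (hasStrongSum_cond a c) (hasStrongSum_cond b d)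

lemma trans (e : KPEquiv M h k) (e' : KPEquiv M k l) : KPEquiv M h l := by
  obtain ⟨ι, x, hx, hxh, hxk⟩ := e.exists_hasStrongSum
  obtain ⟨κ, y, hy, hyk, hyl⟩ := e'.exists_hasStrongSum
  obtain ⟨z, hz, hzx, hzy⟩ := exists_refinement hx hy hxk hyk
  refine of_hasStrongSum (x := fun p : Σ _ : ι, κ => z p.1 p.2) (fun p => hz _ _)
    (.sigma (a := fun i j => star (z i j) * z i j) (fun i j => star_mul_self_nonneg _) hzx hxh) ?_
  exact .sigma_swap (c := fun i j => z i j * star (z i j))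
    (.sigma (a := fun j i => z i j * star (z i j)) (fun j i => mul_star_self_nonneg _) hzy hyl)

/-- The **Riesz decomposition property** of `≈`. -/
lemma exists_sum_eq {κ : Type*} {b : κ → H →L[ℂ] H} (e : KPEquiv M h k) (hbM : ∀ j, b j ∈ M)
    (hb0 : ∀ j, 0 ≤ b j) (hb : HasStrongSum b k) :
    ∃ a : κ → H →L[ℂ] H, (∀ j, KPEquiv M (a j) (b j)) ∧ HasStrongSum a h := by
  obtain ⟨ι, x, hx, hxh, hxk⟩ := e.exists_hasStrongSum
  have hsqrt (j) : star (CFC.sqrt (b j)) * CFC.sqrt (b j) = b j := by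
    rw [star_sqrt, CFC.sqrt_mul_sqrt_self _ (hb0 j)]
  obtain ⟨z, hz, hzx, hzb⟩ := exists_refinement hx (fun j => sqrt_mem (hbM j)) hxk
    (by simpa only [hsqrt] using hb)
  have hz0 (i j) : 0 ≤ star (z i j) * z i j := star_mul_self_nonneg _
  choose a _ ha using fun j => exists_hasStrongSum_of_le (fun i => hz0 i j)
    (fun i => (hzx i).le (hz0 i) j) hxh
  refine ⟨a, fun j => of_hasStrongSum (fun i => hz i j) (ha j) ?_, .swap hz0 hzx hxh ha⟩
  have hbj : CFC.sqrt (b j) * star (CFC.sqrt (b j)) = b j := by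
    rw [star_sqrt, CFC.sqrt_mul_sqrt_self _ (hb0 j)]
  exact hbj ▸ hzb j

lemma exists_le {b : H →L[ℂ] H} (e : KPEquiv M h k) (hbM : b ∈ M) (hb0 : 0 ≤ b) (hbk : b ≤ k) :
    ∃ a ≤ h, KPEquiv M a b ∧ KPEquiv M (h - a) (k - b) := by
  obtain ⟨a, hab, ha⟩ := e.exists_sum_eq (b := fun i => cond i b (k - b))
    (Bool.forall_bool.2 ⟨sub_mem e.mem_right hbM, hbM⟩)
    (Bool.forall_bool.2 ⟨sub_nonneg.2 hbk, hb0⟩)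
    (by simpa only [add_sub_cancel] using hasStrongSum_cond b (k - b))
  obtain rfl : h = a true + a false := ha.unique <| by
    convert hasStrongSum_cond (a true) (a false) with i
    cases i <;> rfl
  refine ⟨a true, le_add_of_nonneg_right (hab false).nonneg_left, hab true, ?_⟩
  rw [add_sub_cancel_left]
  exact hab false

lemma central_mul {t : H →L[ℂ] H} (e : KPEquiv M h k) (ht : t ∈ M)
    (hcomm : ∀ x ∈ M, t * x = x * t) :
    KPEquiv M (star t * t * h) (star t * t * k) := by
  have hcomm_star {x : H →L[ℂ] H} (hx : x ∈ M) : star t * x = x * star t := by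
    simpa only [star_mul, star_star] using (congrArg star (hcomm _ (star_mem hx))).symm
  obtain ⟨ι, x, hx, hxh, hxk⟩ := e.exists_hasStrongSum
  have hleft (i) : star (t * x i) * (t * x i) = star t * t * (star (x i) * x i) := by
    rw [star_mul, ← hcomm_star (star_mem (hx i)), mul_assoc, ← mul_assoc (star (x i)),
      ← hcomm _ (star_mem (hx i))]
    simp only [mul_assoc]
  have hright (i) : t * x i * star (t * x i) = star t * t * (x i * star (x i)) := by
    rw [mul_assoc (star t), hcomm_star (mul_mem ht (mul_mem (hx i) (star_mem (hx i)))), star_mul]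
    simp only [mul_assoc]
  exact of_hasStrongSum (x := fun i => t * x i) (fun i => mul_mem ht (hx i))
    (by simpa only [hleft] using hxh.mul_left (star t * t))
    (by simpa only [hright] using hxk.mul_left (star t * t))

lemma smul {c : ℝ} (hc : 0 ≤ c) (e : KPEquiv M h k) :
    KPEquiv M ((c : ℂ) • h) ((c : ℂ) • k) := by
  have ht : ((√c : ℂ) • 1 : H →L[ℂ] H) ∈ M := M.toStarSubalgebra.smul_mem (one_mem M) _
  have hsq : star ((√c : ℂ) • 1 : H →L[ℂ] H) * ((√c : ℂ) • 1) = (c : ℂ) • 1 := by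
    rw [star_smul, star_one, smul_mul_smul_comm, mul_one, Complex.star_def, Complex.conj_ofReal,
      ← Complex.ofReal_mul, Real.mul_self_sqrt hc]
  simpa only [hsq, smul_mul_assoc, one_mul] using e.central_mul ht fun x _ => by
    rw [smul_mul_assoc, mul_smul_comm, one_mul, mul_one]

lemma centralProj_mul {w : H →L[ℂ] H} (hw : IsCentralProj M w) (e : KPEquiv M h k) :
    KPEquiv M (w * h) (w * k) := by
  obtain ⟨⟨hwM, hsa, hidem⟩, hcomm⟩ := hw
  simpa only [hsa.star_eq, hidem] using e.central_mul hwM hcomm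

end KPEquiv
end KPEquiv

section InfiniteMultiple

variable {M : VonNeumannAlgebra H} {h k l T : H →L[ℂ] H}

/-- Subequivalence `h ≼ k` on the positive cone: `h` is equivalent to an element below `k`. -/
def KPSub (M : VonNeumannAlgebra H) (h k : H →L[ℂ] H) : Prop :=
  ∃ g, KPEquiv M h g ∧ g ≤ k

/-- `T` is the sum of a sequence of mutually equivalent elements of `M₊`. These are the elements
to which the Eilenberg swindle applies. -/
def KPInfiniteMultiple (M : VonNeumannAlgebra H) (T : H →L[ℂ] H) : Prop :=
  ∃ d : ℕ → H →L[ℂ] H, (∀ n, KPEquiv M (d n) (d 0)) ∧ HasStrongSum d T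

lemma KPEquiv.kpSub (e : KPEquiv M h k) : KPSub M h k :=
  ⟨k, e, le_rfl⟩

lemma KPSub.of_le (hM : h ∈ M) (h0 : 0 ≤ h) (hk : h ≤ k) : KPSub M h k :=
  ⟨h, .refl hM h0, hk⟩

lemma KPSub.trans (hk : KPSub M h k) (kl : KPSub M k l) : KPSub M h l := by
  obtain ⟨g, hg, hgk⟩ := hk
  obtain ⟨g', hg', hgl⟩ := kl
  obtain ⟨a, ha, hag, -⟩ := hg'.symm.exists_le hg.mem_right hg.nonneg_right hgk
  exact ⟨a, hg.trans hag.symm, ha.trans hgl⟩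

namespace KPInfiniteMultiple

lemma mem (hT : KPInfiniteMultiple M T) : T ∈ M := by
  obtain ⟨d, hd, hs⟩ := hT
  exact hs.mem fun n => (hd n).mem_left

lemma nonneg (hT : KPInfiniteMultiple M T) : 0 ≤ T := by
  obtain ⟨d, hd, hs⟩ := hT
  exact hs.nonneg fun n => (hd n).nonneg_left

lemma congr (hT : KPInfiniteMultiple M T) (e : KPEquiv M k T) : KPInfiniteMultiple M k := by
  obtain ⟨d, hd, hs⟩ := hT
  obtain ⟨a, had, ha⟩ := e.exists_sum_eq (fun n => (hd n).mem_left)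
    (fun n => (hd n).nonneg_left) hs
  exact ⟨a, fun n => (had n).trans ((hd n).trans (had 0).symm), ha⟩

lemma smul (hT : KPInfiniteMultiple M T) {c : ℝ} (hc : 0 ≤ c) :
    KPInfiniteMultiple M ((c : ℂ) • T) := by
  obtain ⟨d, hd, hs⟩ := hT
  exact ⟨fun n => (c : ℂ) • d n, fun n => (hd n).smul hc, fun ξ => (hs ξ).const_smul _⟩

lemma centralProj_mul (hT : KPInfiniteMultiple M T) {w : H →L[ℂ] H} (hw : IsCentralProj M w) :
    KPInfiniteMultiple M (w * T) := by
  obtain ⟨d, hd, hs⟩ := hT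
  exact ⟨fun n => w * d n, fun n => (hd n).centralProj_mul hw, hs.mul_left w⟩

lemma exists_blocks (hT : KPInfiniteMultiple M T) :
    ∃ B : ℕ → H →L[ℂ] H, (∀ n, KPEquiv M (B n) T) ∧ HasStrongSum B T := by
  obtain ⟨d, hd, hs⟩ := hT
  choose B hB using fun n => hs.exists_comp_injective (fun i => (hd i).nonneg_left)
    (e := fun m : ℕ => Nat.pair n m) fun a b hab => (Nat.pair_eq_pair.1 hab).2
  exact ⟨B, fun n => .sum (fun m => (hd _).trans (hd m).symm) (hB n) hs,
    .of_sigma hB (hs.reindex ((Equiv.sigmaEquivProd ℕ ℕ).trans Nat.pairEquiv))⟩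

/-- The **Eilenberg swindle**. -/
lemma absorb (hT : KPInfiniteMultiple M T) (hhT : KPSub M h T) : KPEquiv M (h + T) T := by
  obtain ⟨g, hg, hgT⟩ := hhT
  obtain ⟨B, hBT, hB⟩ := hT.exists_blocks
  choose p hpB hpg _ using fun n => (hBT n).exists_le hg.mem_right hg.nonneg_right hgT
  obtain ⟨P, hPT, hP⟩ := exists_hasStrongSum_of_le (fun n => (hpg n).nonneg_left) hpB hB
  have hPM : P ∈ M := hP.mem fun n => (hpg n).mem_left
  let q : ℕ → H →L[ℂ] H := fun
    | 0 => h
    | n + 1 => p n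
  have hqp : ∀ n, KPEquiv M (q n) (p n) := fun
    | 0 => hg.trans (hpg 0).symm
    | n + 1 => (hpg n).trans (hpg (n + 1)).symm
  have hshift : KPEquiv M (h + P) P := .sum hqp (.of_succ (f := q) hP) hP
  simpa only [add_assoc, add_sub_cancel] using
    hshift.add (.refl (sub_mem hT.mem hPM) (sub_nonneg.2 hPT))

lemma kpSub_of_hasStrongSum (hT : KPInfiniteMultiple M T) {f : ℕ → H →L[ℂ] H}
    (hf : ∀ n, KPSub M (f n) T) (hs : HasStrongSum f h) : KPSub M h T := by
  obtain ⟨B, hBT, hB⟩ := hT.exists_blocks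
  choose g hfg hgB using fun n => (hf n).trans (hBT n).symm.kpSub
  obtain ⟨G, hGT, hG⟩ := exists_hasStrongSum_of_le (fun n => (hfg n).nonneg_right) hgB hB
  exact ⟨G, .sum hfg hs hG, hGT⟩

lemma nsmul_kpEquiv (hT : KPInfiniteMultiple M T) (n : ℕ) : KPEquiv M ((n + 1) • T) T := by
  have hrefl : KPEquiv M T T := .refl hT.mem hT.nonneg
  induction n with
  | zero => simpa only [zero_add, one_smul] using hrefl
  | succ n ih =>
    rw [succ_nsmul]
    exact (ih.add hrefl).trans (hT.absorb hrefl.kpSub)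

lemma smul_kpSub (hT : KPInfiniteMultiple M T) {c : ℝ} (hc : 0 ≤ c) :
    KPSub M ((c : ℂ) • T) T := by
  obtain ⟨n, hn⟩ := exists_nat_ge c
  have hle : (c : ℂ) • T ≤ (n + 1) • T := by
    rw [Complex.coe_smul, ← Nat.cast_smul_eq_nsmul ℝ]
    exact smul_le_smul_of_nonneg_right (hn.trans (by exact_mod_cast n.le_succ)) hT.nonneg
  exact (KPSub.of_le (hT.smul hc).mem (hT.smul hc).nonneg hle).trans (hT.nsmul_kpEquiv n).kpSub

lemma kpEquiv_smul (hT : KPInfiniteMultiple M T) {c : ℝ} (hc : 0 < c) :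
    KPEquiv M T ((c : ℂ) • T) := by
  have hinv : ((c⁻¹ : ℝ) : ℂ) • (c : ℂ) • T = T := by
    rw [smul_smul, ← Complex.ofReal_mul, inv_mul_cancel₀ hc.ne', Complex.ofReal_one, one_smul]
  have hTc : KPSub M T ((c : ℂ) • T) := by
    simpa only [hinv] using (hT.smul hc.le).smul_kpSub (inv_nonneg.2 hc.le)
  refine (hT.absorb (hT.smul_kpSub hc.le)).symm.trans ?_
  rw [add_comm]
  exact (hT.smul hc.le).absorb hTc

end KPInfiniteMultiple

end InfiniteMultiple

section Exhaustion

universe v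

lemma exists_maximal_subfamily {Y N : Type*} [AddCommMonoid N] [Preorder N] (v : Y → N) {k : N}
    (hk : 0 ≤ k) :
    ∃ A : Set Y, (∀ s : Finset A, ∑ i ∈ s, v i ≤ k) ∧
      ∀ y, (∀ s : Finset A, v y + ∑ i ∈ s, v i ≤ k) → y ∈ A := by
  classical
  let bounded : Set (Set Y) := {A | ∀ s : Finset Y, ↑s ⊆ A → ∑ i ∈ s, v i ≤ k}
  have hfinite : Order.IsOfFiniteCharacter bounded := fun A =>
    ⟨fun hA B hB _ s hs => hA s (hs.trans hB), fun hA s hs => hA s hs s.finite_toSet s subset_rfl⟩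
  have hempty : ∅ ∈ bounded := fun s hs => by
    rw [Set.subset_empty_iff, Finset.coe_eq_empty] at hs
    rwa [hs, Finset.sum_empty]
  obtain ⟨A, -, hA⟩ := hfinite.exists_maximal hempty
  refine ⟨A, fun s => ?_, fun y hy => hA.le_of_ge (y := insert y A) (fun s hs => ?_)
    (Set.subset_insert _ _) (Set.mem_insert _ _)⟩
  · exact (Finset.sum_map s (.subtype (· ∈ A)) v).symm.trans_le
      (hA.prop _ (Finset.map_subtype_subset s))
  · have hys : ∀ i ∈ s.erase y, i ∈ A := fun i hi =>
      (hs (Finset.mem_of_mem_erase hi)).resolve_left (Finset.ne_of_mem_erase hi)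
    by_cases hmem : y ∈ s
    · rw [← Finset.add_sum_erase _ _ hmem, ← Finset.sum_subtype_of_mem v hys]
      exact hy _
    · rw [Finset.erase_eq_of_notMem hmem] at hys
      exact hA.prop s hys

lemma eq_zero_of_forall_nsmul_le {A : Type*} [NonUnitalCStarAlgebra A] [PartialOrder A]
    [StarOrderedRing A] {a b : A} (ha : 0 ≤ a) (hab : ∀ n : ℕ, n • a ≤ b) : a = 0 := by
  by_contra! hne
  obtain ⟨n, hn⟩ := exists_lt_nsmul (norm_pos_iff.2 hne) ‖b‖
  refine hn.not_ge ?_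
  calc n • ‖a‖ = ‖n • a‖ := by rw [← Nat.cast_smul_eq_nsmul ℝ n a, norm_smul]; simp
    _ ≤ ‖b‖ := CStarAlgebra.norm_le_norm_of_nonneg_of_le (nsmul_nonneg ha n) (hab n)

variable {E : Type*} [NormedAddCommGroup E] [InnerProductSpace ℂ E] [CompleteSpace E]

lemma exists_hasStrongSum_le_and_eq_zero_of_le_sub {X : Type v} {κ : Type*}
    {v : X → κ → E →L[ℂ] E} (hv : ∀ x, 0 ≤ v x) {k : κ → E →L[ℂ] E} (hk : 0 ≤ k) :
    ∃ (ι : Type v) (x : ι → X) (a : κ → E →L[ℂ] E),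
      (∀ j, HasStrongSum (fun i => v (x i) j) (a j)) ∧ a ≤ k ∧
      ∀ y, v y ≤ k - a → v y = 0 := by
  -- Maximality over `X × ℕ` allows repetitions: any `v y` below `k - a` occurs infinitely often.
  obtain ⟨A, hAk, hmax⟩ := exists_maximal_subfamily (fun p : X × ℕ => v p.1) hk
  have hAk' (j) (s : Finset A) : ∑ i ∈ s, v i.1.1 j ≤ k j := by
    simpa only [Finset.sum_apply] using hAk s j
  choose a ha using fun j => exists_hasStrongSum_of_sum_le (fun i : A => hv i.1.1 j) (hAk' j)
  refine ⟨A, fun i => i.1.1, a, ha, fun j => (ha j).le_of_sum_le (fun i => hv _ j) (hAk' j),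
    fun y hy => ?_⟩
  have hyA (n : ℕ) : (y, n) ∈ A := hmax _ fun s => by
    have hsa : ∑ i ∈ s, v i.1.1 ≤ a := fun j => by
      simpa only [Finset.sum_apply] using (ha j).sum_le (fun i => hv _ j) s
    exact (add_le_add hy hsa).trans_eq (sub_add_cancel k a)
  ext1 j
  let index : ℕ ↪ A := ⟨fun n => ⟨(y, n), hyA n⟩, fun m n hmn => by simpa using hmn⟩
  refine eq_zero_of_forall_nsmul_le (b := k j) (hv y j) fun n => ?_
  calc n • v y j = ∑ _ ∈ Finset.range n, v y j := by rw [Finset.sum_const, Finset.card_range]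
    _ = ∑ i ∈ (Finset.range n).map index, v i.1.1 j :=
      (Finset.sum_map _ index fun i => v i.1.1 j).symm
    _ ≤ k j := hAk' j _

end Exhaustion

section Finite

variable {M : VonNeumannAlgebra H} {f h k l r T : H →L[ℂ] H}

lemma KPFinite.eq_of_kpEquiv (hh : KPFinite M h) (e : KPEquiv M h k) (hk : k ≤ h) : k = h :=
  hh k e.mem_right ((nonneg_iff_isPositive k).1 e.nonneg_right) hk e

lemma KPFinite.mono (hh : KPFinite M h) (hM : h ∈ M) (lM : l ∈ M) (hl : l ≤ h) :
    KPFinite M l := by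
  intro g _ _ hgl e
  have e' : KPEquiv M h (h - l + g) := by
    simpa only [sub_add_cancel] using
      (KPEquiv.refl (sub_mem hM lM) (sub_nonneg.2 hl)).add e
  have hle : h - l + g ≤ h := (add_le_add_right hgl _).trans_eq (sub_add_cancel h l)
  exact add_left_cancel ((hh.eq_of_kpEquiv e' hle).trans (sub_add_cancel h l).symm)

lemma KPInfiniteMultiple.eq_zero_of_kpFinite (hT : KPInfiniteMultiple M T) (hfin : KPFinite M T) :
    T = 0 := by
  obtain ⟨d, hd, hs⟩ := hT
  have htail : HasStrongSum (fun n => d (n + 1)) (T - d 0) := fun ξ => by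
    simpa only [Finset.sum_range_one, sub_apply] using (hasSum_nat_add_iff' 1).2 (hs ξ)
  have hequiv : KPEquiv M T (T - d 0) := .sum (fun n => (hd n).trans (hd (n + 1)).symm) hs htail
  have h0 : d 0 = 0 := sub_eq_self.1 <|
    hfin.eq_of_kpEquiv hequiv (sub_le_self _ (hd 0).nonneg_left)
  have hd0 (n) : d n = 0 := (h0 ▸ hd n).eq_zero_left
  exact hs.unique fun ξ => by simpa only [hd0, zero_apply] using hasSum_zero

lemma KPInfiniteMultiple.eq_zero_of_kpSub (hT : KPInfiniteMultiple M T) (hTf : KPSub M T f)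
    (fM : f ∈ M) (hf : KPFinite M f) : T = 0 := by
  obtain ⟨g, e, hgf⟩ := hTf
  have hg : g = 0 := (hT.congr e.symm).eq_zero_of_kpFinite (hf.mono fM e.mem_right hgf)
  exact (hg ▸ e).eq_zero_left

lemma exists_seq_sub_kpEquiv (e : KPEquiv M r l) (hlr : l ≤ r) :
    ∃ a : ℕ → H →L[ℂ] H, a 0 = r ∧ a 1 = l ∧ (∀ n, 0 ≤ a n) ∧
      ∀ n, KPEquiv M (a n - a (n + 1)) (r - l) := by
  let Pair := {p : (H →L[ℂ] H) × (H →L[ℂ] H) // KPEquiv M p.1 p.2 ∧ p.2 ≤ p.1}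
  have hstep (p : Pair) : ∃ q : Pair, q.1.1 = p.1.2 ∧
      KPEquiv M (q.1.1 - q.1.2) (p.1.1 - p.1.2) := by
    obtain ⟨⟨a, a'⟩, ha, hle⟩ := p
    obtain ⟨b, hb, hba', hsub⟩ := ha.symm.exists_le ha.mem_right ha.nonneg_right hle
    exact ⟨⟨(a', b), hba'.symm, hb⟩, rfl, hsub⟩
  choose next hnext hsub using hstep
  let p : ℕ → Pair := fun n => next^[n] ⟨(r, l), e, hlr⟩
  have hp (n) : p (n + 1) = next (p n) := Function.iterate_succ_apply' _ _ _
  have hp_fst (n) : (p (n + 1)).1.1 = (p n).1.2 := by rw [hp, hnext]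
  refine ⟨fun n => (p n).1.1, rfl, hp_fst 0, fun n => (p n).2.1.nonneg_left, fun n => ?_⟩
  change KPEquiv M ((p n).1.1 - (p (n + 1)).1.1) (r - l)
  rw [hp_fst]
  induction n with
  | zero => exact .refl (sub_mem e.mem_left e.mem_right) (sub_nonneg.2 hlr)
  | succ n ih => exact (hp n ▸ hsub (p n)).trans ih

lemma exists_kpInfiniteMultiple_of_not_kpFinite (hr : ¬ KPFinite M r) :
    ∃ (d : ℕ → H →L[ℂ] H) (T : H →L[ℂ] H), (∀ n, KPEquiv M (d n) (d 0)) ∧ HasStrongSum d T ∧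
      T ≤ r ∧ d 0 ≠ 0 := by
  rw [KPFinite] at hr
  push Not at hr
  obtain ⟨l, -, -, hlr, e, hne⟩ := hr
  obtain ⟨a, ha0, ha1, hpos, hd⟩ := exists_seq_sub_kpEquiv e hlr
  have hd_nonneg (n) : 0 ≤ a n - a (n + 1) := (hd n).nonneg_left
  have hsum_le (s : Finset ℕ) : ∑ n ∈ s, (a n - a (n + 1)) ≤ r := by
    obtain ⟨N, hN⟩ := s.exists_nat_subset_range
    calc ∑ n ∈ s, (a n - a (n + 1)) ≤ ∑ n ∈ Finset.range N, (a n - a (n + 1)) :=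
          Finset.sum_le_sum_of_subset_of_nonneg hN fun n _ _ => hd_nonneg n
      _ = r - a N := by rw [Finset.sum_range_sub', ha0]
      _ ≤ r := sub_le_self r (hpos N)
  obtain ⟨T, hT⟩ := exists_hasStrongSum_of_sum_le hd_nonneg hsum_le
  refine ⟨_, T, fun n => (hd n).trans (hd 0).symm, hT, hT.le_of_sum_le hd_nonneg hsum_le, ?_⟩
  rw [zero_add, ha0, ha1]
  exact sub_ne_zero.2 (Ne.symm hne)

lemma KPInfiniteMultiple.of_hasStrongSum {ι : Type u} {d : ι → ℕ → H →L[ℂ] H} {S : ι → H →L[ℂ] H}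
    (hd : ∀ i n, KPEquiv M (d i n) (d i 0)) (hS : ∀ i, HasStrongSum (d i) (S i))
    (hT : HasStrongSum S T) : KPInfiniteMultiple M T := by
  have hd_nonneg (i n) : 0 ≤ d i n := (hd i n).nonneg_left
  choose D _ hD using fun n => exists_hasStrongSum_of_le (fun i => hd_nonneg i n)
    (fun i => (hS i).le (hd_nonneg i) n) hT
  exact ⟨D, fun n => .sum (fun i => hd i n) (hD n) (hD 0), .swap hd_nonneg hS hT hD⟩

lemma exists_kpInfiniteMultiple_le_kpFinite_sub (M : VonNeumannAlgebra H) (hk : 0 ≤ k) :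
    ∃ T, KPInfiniteMultiple M T ∧ T ≤ k ∧ KPFinite M (k - T) := by
  let X := {p : (ℕ → H →L[ℂ] H) × (H →L[ℂ] H) //
    (∀ n, KPEquiv M (p.1 n) (p.1 0)) ∧ HasStrongSum p.1 p.2}
  have hX (p : X) : 0 ≤ p.1.2 := p.2.2.nonneg fun n => (p.2.1 n).nonneg_left
  obtain ⟨ι, p, T, hT, hTk, hmax⟩ := exists_hasStrongSum_le_and_eq_zero_of_le_sub
    (v := fun (p : X) (_ : Unit) => p.1.2) (fun p _ => hX p) (k := fun _ => k) fun _ => hk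
  refine ⟨T (), .of_hasStrongSum (fun i => (p i).2.1) (fun i => (p i).2.2) (hT ()), hTk (), ?_⟩
  by_contra hinf
  obtain ⟨d, S, hd, hS, hSk, hne⟩ := exists_kpInfiniteMultiple_of_not_kpFinite hinf
  have hd_nonneg (n) : 0 ≤ d n := (hd n).nonneg_left
  have hS0 : S = 0 := congrFun (hmax ⟨(d, S), hd, hS⟩ fun _ => hSk) ()
  exact hne (le_antisymm (hS0 ▸ hS.le hd_nonneg 0) (hd_nonneg 0))

end Finite

section CentralProjection

variable {M : VonNeumannAlgebra H} {a b w : H →L[ℂ] H}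

namespace IsCentralProj

lemma compl (hw : IsCentralProj M w) : IsCentralProj M (1 - w) := by
  obtain ⟨⟨hwM, hsa, hidem⟩, hcomm⟩ := hw
  refine ⟨⟨sub_mem (one_mem M) hwM, (IsSelfAdjoint.one _).sub hsa,
    IsIdempotentElem.one_sub hidem⟩, fun x hx => ?_⟩
  rw [sub_mul, mul_sub, hcomm x hx, one_mul, mul_one]

lemma mul_nonneg (hw : IsCentralProj M w) (haM : a ∈ M) (ha : 0 ≤ a) : 0 ≤ w * a :=
  ((KPEquiv.refl haM ha).centralProj_mul hw).nonneg_left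

lemma mul_le_mul (hw : IsCentralProj M w) (haM : a ∈ M) (hbM : b ∈ M) (hab : a ≤ b) :
    w * a ≤ w * b := by
  simpa only [mul_sub, sub_nonneg] using hw.mul_nonneg (sub_mem hbM haM) (sub_nonneg.2 hab)

lemma mul_le (hw : IsCentralProj M w) (haM : a ∈ M) (ha : 0 ≤ a) : w * a ≤ a := by
  simpa only [sub_mul, one_mul, sub_nonneg] using hw.compl.mul_nonneg haM ha

end IsCentralProj

/-- The closed linear span of `{x (f ξ) | x ∈ M, ξ ∈ H}`, the range of the central carrier
of `f`. -/
abbrev centralCarrierSpace (M : VonNeumannAlgebra H) (f : H →L[ℂ] H) : Submodule ℂ H :=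
  (Submodule.span ℂ {η | ∃ x ∈ M, ∃ ξ, x (f ξ) = η}).topologicalClosure

/-- The central carrier of `f` in `M`: the smallest central projection `w` of `M` with `w f = f`
when `f ∈ M`. -/
def centralCarrier (M : VonNeumannAlgebra H) (f : H →L[ℂ] H) : H →L[ℂ] H :=
  (centralCarrierSpace M f).starProjection

variable {f t : H →L[ℂ] H}

lemma centralCarrierSpace_le {K : Submodule ℂ H} (hK : IsClosed (K : Set H))
    (hf : ∀ x ∈ M, ∀ ξ, x (f ξ) ∈ K) : centralCarrierSpace M f ≤ K :=
  Submodule.topologicalClosure_minimal _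
    (Submodule.span_le.2 <| by rintro _ ⟨x, hx, ξ, rfl⟩; exact hf x hx ξ) hK

lemma apply_mem_centralCarrierSpace {x : H →L[ℂ] H} (hx : x ∈ M) (ξ : H) :
    x (f ξ) ∈ centralCarrierSpace M f :=
  Submodule.le_topologicalClosure _ (Submodule.subset_span ⟨x, hx, ξ, rfl⟩)

lemma map_mem_centralCarrierSpace (y : H →L[ℂ] H)
    (hy : ∀ x ∈ M, ∀ ξ, y (x (f ξ)) ∈ centralCarrierSpace M f) {η : H}
    (hη : η ∈ centralCarrierSpace M f) : y η ∈ centralCarrierSpace M f :=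
  centralCarrierSpace_le (K := (centralCarrierSpace M f).comap y.toLinearMap)
    ((Submodule.isClosed_topologicalClosure _).preimage y.continuous) hy hη

lemma isCentralProj_centralCarrier (hf : f ∈ M) : IsCentralProj M (centralCarrier M f) := by
  have hproj : IsStarProjection (centralCarrier M f) := isStarProjection_starProjection
  have hrange : (centralCarrier M f).range = centralCarrierSpace M f :=
    Submodule.range_starProjection _
  have hM : centralCarrier M f ∈ M := by
    rw [VonNeumannAlgebra.IsStarProjection.mem_iff hproj, hrange]
    refine fun y hy η hη => map_mem_centralCarrierSpace y (fun x hx ξ => ?_) hη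
    have hcomm : y (x (f ξ)) = x (f (y ξ)) :=
      DFunLike.congr_fun (mem_iff_forall_mem_commutant.1 (mul_mem hx hf) y hy) ξ
    exact hcomm ▸ apply_mem_centralCarrierSpace hx (y ξ)
  have hM' : centralCarrier M f ∈ M.commutant := by
    rw [VonNeumannAlgebra.IsStarProjection.mem_iff hproj, hrange, M.commutant_commutant]
    exact fun y hy η hη => map_mem_centralCarrierSpace y
      (fun x hx ξ => apply_mem_centralCarrierSpace (mul_mem hy hx) ξ) hη
  exact ⟨⟨hM, hproj.isSelfAdjoint, hproj.isIdempotentElem⟩, fun x hx =>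
    mem_iff_forall_mem_commutant.1 hx _ hM'⟩

lemma centralCarrier_mul_self (M : VonNeumannAlgebra H) (f : H →L[ℂ] H) :
    centralCarrier M f * f = f :=
  ContinuousLinearMap.ext fun ξ => Submodule.starProjection_eq_self_iff.2
    (apply_mem_centralCarrierSpace (one_mem M) ξ)

lemma mul_centralCarrier_eq_zero (ht : ∀ x ∈ M, t * x * f = 0) : t * centralCarrier M f = 0 :=
  ContinuousLinearMap.ext fun ξ => centralCarrierSpace_le (K := t.ker) t.isClosed_ker
    (fun x hx ξ => DFunLike.congr_fun (ht x hx) ξ) (Submodule.starProjection_apply_mem _ ξ)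

end CentralProjection

section Comparison

lemma star_mul_self_le_of_norm_le_one {A : Type*} [CStarAlgebra A] [PartialOrder A]
    [StarOrderedRing A] {b : A} (hb : ‖b‖ ≤ 1) (t : A) : star (b * t) * (b * t) ≤ star t * t := by
  have hb' : star b * b ≤ 1 := (CStarAlgebra.norm_le_one_iff_of_nonneg _).1 <| by
    rw [CStarRing.norm_star_mul_self]
    exact mul_le_one₀ hb (norm_nonneg b) hb
  simpa only [star_mul, mul_assoc, one_mul] using star_left_conjugate_le_conjugate hb' t

variable {M : VonNeumannAlgebra H} {a b f T : H →L[ℂ] H}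

lemma mul_mul_eq_zero_of_forall_eq_zero (haM : a ∈ M) (ha : 0 ≤ a) (hbM : b ∈ M) (hb : 0 ≤ b)
    (hab : ∀ y ∈ M, star y * y ≤ a → y * star y ≤ b → y = 0) {x : H →L[ℂ] H} (hx : x ∈ M) :
    b * x * a = 0 := by
  set s := CFC.sqrt a with hs
  set t := CFC.sqrt b with ht
  have hss : s * s = a := CFC.sqrt_mul_sqrt_self a ha
  have htt : t * t = b := CFC.sqrt_mul_sqrt_self b hb
  -- Both `c t x` and `c s x*` are contractions, so `y = c t x s` satisfies `y* y ≤ a`, `y y* ≤ b`.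
  set c : ℝ := (‖t * x‖ + ‖s * star x‖ + 1)⁻¹ with hc
  have hc0 : 0 < c := by positivity
  have hcontr {u : H →L[ℂ] H} (hu : ‖u‖ ≤ ‖t * x‖ + ‖s * star x‖) : ‖c • u‖ ≤ 1 := by
    rw [norm_smul, Real.norm_of_nonneg hc0.le, hc, inv_mul_le_one₀ (by positivity)]
    linarith
  have hy : c • (t * x) * s = 0 := by
    refine hab _ (mul_mem (M.toStarSubalgebra.smul_mem (mul_mem (sqrt_mem hbM) hx) (c : ℂ))
      (sqrt_mem haM)) ?_ ?_
    · have := star_mul_self_le_of_norm_le_one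
        (hcontr (le_add_of_nonneg_right (norm_nonneg (s * star x)))) s
      rwa [hs, star_sqrt, ← hs, hss] at this
    · have hstar : star (c • (t * x) * s) = c • (s * star x) * t := by
        rw [smul_mul_assoc, star_smul, star_mul, star_mul, hs, ht, star_sqrt, star_sqrt,
          star_trivial, smul_mul_assoc, mul_assoc]
      have := star_mul_self_le_of_norm_le_one
        (hcontr (le_add_of_nonneg_left (norm_nonneg (t * x)))) t
      rwa [← hstar, star_star, ht, star_sqrt, ← ht, htt] at this
  rw [smul_mul_assoc, smul_eq_zero_iff_right hc0.ne'] at hy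
  calc b * x * a = t * (t * x * s) * s := by rw [← hss, ← htt]; simp only [mul_assoc]
    _ = 0 := by rw [hy, mul_zero, zero_mul]

lemma exists_kpEquiv_le_and_forall_eq_zero (M : VonNeumannAlgebra H) (ha : 0 ≤ a) (hb : 0 ≤ b) :
    ∃ a' ≤ a, ∃ b' ≤ b, KPEquiv M a' b' ∧
      ∀ y ∈ M, star y * y ≤ a - a' → y * star y ≤ b - b' → y = 0 := by
  obtain ⟨ι, x, c, hc, hcle, hmax⟩ := exists_hasStrongSum_le_and_eq_zero_of_le_sub
    (v := fun (x : {x // x ∈ M}) i => cond i (star x.1 * x.1) (x.1 * star x.1))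
    (fun x => Bool.forall_bool.2 ⟨mul_star_self_nonneg x.1, star_mul_self_nonneg x.1⟩)
    (k := fun i => cond i a b) (Bool.forall_bool.2 ⟨hb, ha⟩)
  refine ⟨c true, hcle true, c false, hcle false,
    .of_hasStrongSum (fun i => (x i).2) (hc true) (hc false), fun y hy hya hyb => ?_⟩
  exact (CStarRing.star_mul_self_eq_zero_iff y).1
    (congrFun (hmax ⟨y, hy⟩ (Bool.forall_bool.2 ⟨hyb, hya⟩)) true)

/-- The **comparison theorem**. -/
lemma exists_isCentralProj_kpSub (hfM : f ∈ M) (hf : 0 ≤ f) (hTM : T ∈ M) (hT : 0 ≤ T) :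
    ∃ w, IsCentralProj M w ∧ KPSub M (w * T) (w * f) ∧ KPSub M ((1 - w) * f) ((1 - w) * T) := by
  obtain ⟨b, hbf, a, haT, e, hmax⟩ := exists_kpEquiv_le_and_forall_eq_zero M hf hT
  have hfbM : f - b ∈ M := sub_mem hfM e.mem_left
  have hTaM : T - a ∈ M := sub_mem hTM e.mem_right
  set w := centralCarrier M (f - b)
  have hw : IsCentralProj M w := isCentralProj_centralCarrier hfbM
  have hwT : w * T = w * a := by
    rw [← sub_eq_zero, ← mul_sub, hw.2 _ hTaM]
    exact mul_centralCarrier_eq_zero fun x hx => mul_mul_eq_zero_of_forall_eq_zero hfbM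
      (sub_nonneg.2 hbf) hTaM (sub_nonneg.2 haT) hmax hx
  have hwf : (1 - w) * f = (1 - w) * b := by
    rw [← sub_eq_zero, ← mul_sub, sub_mul, one_mul, centralCarrier_mul_self, sub_self]
  refine ⟨w, hw, ⟨w * b, ?_, hw.mul_le_mul e.mem_left hfM hbf⟩,
    ⟨(1 - w) * a, ?_, hw.compl.mul_le_mul e.mem_right hTM haT⟩⟩
  · exact hwT ▸ e.symm.centralProj_mul hw
  · exact hwf ▸ e.centralProj_mul hw.compl

end Comparison

section CentralSupport

variable {M : VonNeumannAlgebra H} {f h k l T z : H →L[ℂ] H}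

/-- The central support of `h` lies below that of `k`, phrased through the central projections
annihilating `k` so that neither support has to be constructed. -/
def CentralSupportLE (M : VonNeumannAlgebra H) (h k : H →L[ℂ] H) : Prop :=
  ∀ w, IsCentralProj M w → w * k = 0 → w * h = 0

lemma IsCentralSupport.centralSupportLE (hz : IsCentralSupport M k z) (hzh : z * h = h) :
    CentralSupportLE M h k := by
  intro w hw hwk
  have hzw : z * w = 0 := by
    have := hz.2.2 (1 - w) hw.compl (by rw [sub_mul, one_mul, hwk, sub_zero])
    rwa [mul_sub, mul_one, sub_eq_self] at this
  rw [← hzh, ← mul_assoc, hw.2 z hz.1.1.1, hzw, zero_mul]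

namespace CentralSupportLE

lemma trans (hk : CentralSupportLE M h k) (kl : CentralSupportLE M k l) : CentralSupportLE M h l :=
  fun w hw hwl => hk w hw (kl w hw hwl)

lemma of_le (hfM : f ∈ M) (hf : 0 ≤ f) (hhM : h ∈ M) (hfh : f ≤ h) : CentralSupportLE M f h :=
  fun _ hw hwh => le_antisymm (hwh ▸ hw.mul_le_mul hfM hhM hfh) (hw.mul_nonneg hfM hf)

lemma kpSub (hfT : CentralSupportLE M f T) (hfM : f ∈ M) (hf : 0 ≤ f) (hfin : KPFinite M f)
    (hT : KPInfiniteMultiple M T) : KPSub M f T := by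
  obtain ⟨w, hw, hwTf, hwfT⟩ := exists_isCentralProj_kpSub hfM hf hT.mem hT.nonneg
  have hwfM : w * f ∈ M := mul_mem hw.1.1 hfM
  have hwT : w * T = 0 := (hT.centralProj_mul hw).eq_zero_of_kpSub hwTf hwfM
    (hfin.mono hfM hwfM (hw.mul_le hfM hf))
  have hf_eq : (1 - w) * f = f := by rw [sub_mul, one_mul, hfT w hw hwT, sub_zero]
  have hT_eq : (1 - w) * T = T := by rw [sub_mul, one_mul, hwT, sub_zero]
  rwa [hf_eq, hT_eq] at hwfT

end CentralSupportLE

lemma KPProperlyInfinite.centralSupportLE (hk : KPProperlyInfinite M k) (hkM : k ∈ M)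
    (hTM : T ∈ M) (hTk : T ≤ k) (hfin : KPFinite M (k - T)) : CentralSupportLE M k T := by
  intro w hw hwT
  have hrM : k - T ∈ M := sub_mem hkM hTM
  have hwk : w * (k - T) = w * k := by rw [mul_sub, hwT, sub_zero]
  exact hk.2 w hw <| hwk ▸
    hfin.mono hrM (mul_mem hw.1.1 hrM) (hw.mul_le hrM (sub_nonneg.2 hTk))

lemma KPProperlyInfinite.kpInfiniteMultiple (hk : KPProperlyInfinite M k) (hkM : k ∈ M)
    (hk0 : 0 ≤ k) : KPInfiniteMultiple M k := by
  obtain ⟨T, hT, hTk, hfin⟩ := exists_kpInfiniteMultiple_le_kpFinite_sub M hk0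
  have hrM : k - T ∈ M := sub_mem hkM hT.mem
  have hr0 : 0 ≤ k - T := sub_nonneg.2 hTk
  have hrk : CentralSupportLE M (k - T) k := .of_le hrM hr0 hkM (sub_le_self k hT.nonneg)
  have hrT : KPSub M (k - T) T :=
    (hrk.trans (hk.centralSupportLE hkM hT.mem hTk hfin)).kpSub hrM hr0 hfin hT
  exact hT.congr (sub_add_cancel k T ▸ hT.absorb hrT)

end CentralSupport

theorem kp_absorption_general (M : VonNeumannAlgebra H) (h k : H →L[ℂ] H) (hh : h ∈ M)
    (hk : k ∈ M) (kpos : k.IsPositive) (hcs : CentralSupportLE M h k)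
    (kinf : KPProperlyInfinite M k)
    (hsum : ∃ f : ℕ → H →L[ℂ] H,
      (∀ n, f n ∈ M ∧ (f n).IsPositive ∧ KPFinite M (f n)) ∧
      ∀ ξ : H, HasSum (fun n => f n ξ) (h ξ)) :
    (∀ c : ℝ, 0 < c → KPEquiv M k ((c : ℂ) • k)) ∧ KPEquiv M (h + k) k := by
  have hmult : KPInfiniteMultiple M k :=
    kinf.kpInfiniteMultiple hk ((nonneg_iff_isPositive k).2 kpos)
  refine ⟨fun c hc => hmult.kpEquiv_smul hc, hmult.absorb ?_⟩
  obtain ⟨f, hf, hfh⟩ := hsum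
  have hf0 (n) : 0 ≤ f n := (nonneg_iff_isPositive _).2 (hf n).2.1
  refine hmult.kpSub_of_hasStrongSum (fun n => ?_) hfh
  have hfk : CentralSupportLE M (f n) k :=
    (CentralSupportLE.of_le (hf n).1 (hf0 n) hh (HasStrongSum.le hfh hf0 n)).trans hcs
  exact hfk.kpSub (hf n).1 (hf0 n) (hf n).2.2 hmult

/-- If `h, k ∈ M₊` have equal central support, `k` is properly infinite,
and `h` is a countable sum of finite elements, then `k ≈ λ k` for every `λ ∈ (0,∞)` and
`(h + k) ≈ k` (absorption). -/
theorem kp_absorption (M : VonNeumannAlgebra H) (h k z : H →L[ℂ] H)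
    (hh : h ∈ M) (hk : k ∈ M) (hpos : h.IsPositive) (kpos : k.IsPositive)
    (hcs : IsCentralSupport M h z) (kcs : IsCentralSupport M k z)
    (kinf : KPProperlyInfinite M k)
    (hsum : ∃ f : ℕ → H →L[ℂ] H,
      (∀ n, f n ∈ M ∧ (f n).IsPositive ∧ KPFinite M (f n)) ∧
      ∀ ξ : H, HasSum (fun n => f n ξ) (h ξ)) :
    (∀ c : ℝ, 0 < c → KPEquiv M k ((c : ℂ) • k)) ∧ KPEquiv M (h + k) k :=
  kp_absorption_general M h k hh hk kpos (kcs.centralSupportLE hcs.2.1) kinf hsum
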